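/- Let R be a commutative ring, S a multiplicatively closed subset of R, and M a finitely generated faithful multiplication R-module. For an ideal I of R, the submodule N = IM is S-quasi-copure in M if and only if I is an S-quasi-copure ideal of R. -/

import Mathlib

variable {R : Type*} [CommRing R]

/-- `(0 :_M I)` : the elements of `M` annihilated by the ideal `I`. -/
def ann0 (R : Type*) [CommRing R] (M : Type*) [AddCommGroup M] [Module R M]
    (I : Ideal R) : Submodule R M :=
  Submodule.torsionBySet R M (I : Set R)

/-- `N` is an S-small submodule: `sM ≤ N + L` implies `tM ≤ L` for some `t ∈ S`. -/
def SSmall (S : Set R) {M : Type*} [AddCommGroup M] [Module R M] (N : Submodule R M) : Prop :=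
  ∀ (L : Submodule R M), ∀ s ∈ S, (∀ m : M, s • m ∈ N ⊔ L) → ∃ t ∈ S, ∀ m : M, t • m ∈ L

/-- `N` is an S-essential submodule: `N ⊓ L = 0` implies `sL = 0` for some `s ∈ S`. -/
def SEssential (S : Set R) {M : Type*} [AddCommGroup M] [Module R M] (N : Submodule R M) : Prop :=
  ∀ L : Submodule R M, N ⊓ L = ⊥ → ∃ s ∈ S, ∀ x ∈ L, s • x = (0 : M)

/-- `M` is an S-comultiplication module. -/
def SComult (S : Set R) (M : Type*) [AddCommGroup M] [Module R M] : Prop :=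
  ∀ N : Submodule R M, ∃ s ∈ S, ∃ I : Ideal R,
    (∀ x ∈ ann0 R M I, s • x ∈ N) ∧ N ≤ ann0 R M I

/-- `M` satisfies the S-double annihilator condition. -/
def SDAC (S : Set R) (M : Type*) [AddCommGroup M] [Module R M] : Prop :=
  ∀ I : Ideal R, ∃ s ∈ S, ∀ r ∈ (ann0 R M I).annihilator, s * r ∈ I

/-- `L` is an S-copure submodule: `s(L :_M I) ⊆ L + (0 :_M I)` for all ideals `I`. -/
def SCopure (S : Set R) {M : Type*} [AddCommGroup M] [Module R M] (L : Submodule R M) : Prop :=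
  ∃ s ∈ S, ∀ (I : Ideal R) (m : M), (∀ a ∈ I, a • m ∈ L) → s • m ∈ L ⊔ ann0 R M I

/-- `P` is a prime submodule of `M`. -/
def IsPrimeSubmodule {M : Type*} [AddCommGroup M] [Module R M] (P : Submodule R M) : Prop :=
  P ≠ ⊤ ∧ ∀ (a : R) (m : M), a • m ∈ P → a ∈ P.colon ⊤ ∨ m ∈ P

/-- `P` is an S-prime submodule of `M`. -/
def SPrime (S : Set R) {M : Type*} [AddCommGroup M] [Module R M] (P : Submodule R M) : Prop :=
  ((P.colon ⊤ : Set R) ∩ S = ∅) ∧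
    ∃ s ∈ S, ∀ (a : R) (m : M), a • m ∈ P → s * a ∈ P.colon ⊤ ∨ s • m ∈ P

/-- `N` is an S-quasi-copure submodule: every S-prime submodule containing `N` is S-copure. -/
def SQuasiCopure (S : Set R) {M : Type*} [AddCommGroup M] [Module R M] (N : Submodule R M) : Prop :=
  ∀ P : Submodule R M, SPrime S P → N ≤ P → SCopure S P

/-- `N` is a weak S-copure submodule: every prime submodule containing `N` is S-copure. -/
def WeakSCopure (S : Set R) {M : Type*} [AddCommGroup M] [Module R M] (N : Submodule R M) : Prop :=
  ∀ P : Submodule R M, IsPrimeSubmodule P → N ≤ P → SCopure S P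


section aux
variable {R : Type*} [CommRing R] {M : Type*} [AddCommGroup M] [Module R M]

theorem aux_cancel [Module.Finite R M]
    (hfaith : (⊤ : Submodule R M).annihilator = ⊥)
    (hmult : ∀ A : Submodule R M, ∃ J : Ideal R, A = J • (⊤ : Submodule R M))
    (K : Ideal R) (r : R) (h : ∀ m : M, r • m ∈ K • (⊤ : Submodule R M)) : r ∈ K := by
  have hf : ∀ c : R, (∀ x : M, c • x = 0) → c = 0 := by
    intro c hc
    have : c ∈ (⊤ : Submodule R M).annihilator :=
      Submodule.mem_annihilator.2 fun x _ => hc x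
    rw [hfaith] at this
    simpa using this
  let T : Set R := {a | ∃ m : M, ∀ x : M, a • x ∈ Submodule.span R {m}}
  have hT : Ideal.span T = ⊤ := by
    have hle : (⊤ : Submodule R M) ≤ Ideal.span T • (⊤ : Submodule R M) := by
      intro m _
      obtain ⟨J, hJ⟩ := hmult (Submodule.span R {m})
      have hm : m ∈ J • (⊤ : Submodule R M) := hJ ▸ Submodule.mem_span_singleton_self m
      refine Submodule.smul_mono_left ?_ hm
      intro j hj
      refine Ideal.subset_span ⟨m, fun x => ?_⟩
      rw [hJ]
      exact Submodule.smul_mem_smul hj trivial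
    obtain ⟨c, hc, hc0⟩ := Submodule.exists_sub_one_mem_and_smul_eq_zero_of_fg_of_le_smul
      (Ideal.span T) (⊤ : Submodule R M) Module.Finite.fg_top hle
    have : c = 0 := hf c fun x => hc0 x trivial
    subst this
    rw [Ideal.eq_top_iff_one]
    have := (Ideal.span T).neg_mem hc
    simpa using this
  let Q : Ideal R := Submodule.comap (LinearMap.mulRight R r) K
  have hQ : ∀ c, c ∈ Q ↔ c * r ∈ K := fun c => Iff.rfl
  have hrad : Ideal.span T ≤ Q.radical := by
    rw [Ideal.span_le]
    rintro a ⟨m, ha⟩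
    refine ⟨2, (hQ _).2 ?_⟩
    have key : ∀ y ∈ K • (⊤ : Submodule R M), ∃ k ∈ K, a • y = k • m := by
      intro y hy
      refine Submodule.smul_induction_on hy ?_ ?_
      · intro k hk n _
        obtain ⟨c, hc⟩ := Submodule.mem_span_singleton.1 (ha n)
        refine ⟨k * c, K.mul_mem_right _ hk, ?_⟩
        rw [smul_comm, ← hc, mul_smul]
      · rintro x y ⟨k, hk, h1⟩ ⟨l, hl, h2⟩
        exact ⟨k + l, K.add_mem hk hl, by rw [smul_add, h1, h2, add_smul]⟩
    obtain ⟨k, hk, hkm⟩ := key _ (h m)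
    have : (a * r - k) * a = 0 := by
      apply hf
      intro x
      obtain ⟨c, hc⟩ := Submodule.mem_span_singleton.1 (ha x)
      rw [mul_smul, ← hc, smul_comm, sub_smul, mul_smul, hkm, sub_self, smul_zero]
    have h2 : a ^ 2 * r = k * a := by linear_combination this
    rw [h2]
    exact K.mul_mem_right _ hk
  rw [hT, top_le_iff, Ideal.radical_eq_top, Ideal.eq_top_iff_one, hQ, one_mul] at hrad
  exact hrad

theorem aux_elem [Module.Finite R M]
    (hfaith : (⊤ : Submodule R M).annihilator = ⊥)
    (hmult : ∀ A : Submodule R M, ∃ J : Ideal R, A = J • (⊤ : Submodule R M))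
    (m : M) : ∃ J : Ideal R, ∀ (K : Ideal R) (r : R),
      r • m ∈ K • (⊤ : Submodule R M) ↔ ∀ j ∈ J, r * j ∈ K := by
  obtain ⟨J, hJ⟩ := hmult (Submodule.span R {m})
  refine ⟨J, fun K r => ⟨fun h j hj => ?_, fun h => ?_⟩⟩
  · refine aux_cancel hfaith hmult K _ fun x => ?_
    have : j • x ∈ Submodule.span R {m} := hJ ▸ Submodule.smul_mem_smul hj trivial
    obtain ⟨c, hc⟩ := Submodule.mem_span_singleton.1 this
    rw [mul_smul, ← hc, smul_comm]
    exact Submodule.smul_mem _ _ h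
  · have hm : m ∈ J • (⊤ : Submodule R M) := hJ ▸ Submodule.mem_span_singleton_self m
    refine Submodule.smul_induction_on hm ?_ ?_
    · intro j hj n _
      rw [← mul_smul]
      exact Submodule.smul_mem_smul (h j hj) trivial
    · intro x y hx hy
      rw [smul_add]
      exact add_mem hx hy

theorem aux_colon_iff (P : Submodule R M) (r : R) :
    r ∈ P.colon ⊤ ↔ ∀ m : M, r • m ∈ P := by
  simp [Submodule.mem_colon]

theorem aux_colon_ideal (K : Ideal R) : Submodule.colon K ⊤ = K := by
  ext r
  rw [aux_colon_iff]
  exact ⟨fun h => by simpa using h 1, fun h m => K.mul_mem_right _ h⟩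

theorem aux_colon [Module.Finite R M]
    (hfaith : (⊤ : Submodule R M).annihilator = ⊥)
    (hmult : ∀ A : Submodule R M, ∃ J : Ideal R, A = J • (⊤ : Submodule R M))
    (K : Ideal R) : (K • (⊤ : Submodule R M)).colon ⊤ = K := by
  ext r
  rw [aux_colon_iff]
  exact ⟨aux_cancel hfaith hmult K r, fun h m => Submodule.smul_mem_smul h trivial⟩

theorem aux_prime [Module.Finite R M] (S : Set R)
    (hfaith : (⊤ : Submodule R M).annihilator = ⊥)
    (hmult : ∀ A : Submodule R M, ∃ J : Ideal R, A = J • (⊤ : Submodule R M))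
    (K : Ideal R) : SPrime S (K • (⊤ : Submodule R M)) ↔ SPrime S K := by
  unfold SPrime
  rw [aux_colon hfaith hmult, aux_colon_ideal]
  refine and_congr Iff.rfl (exists_congr fun s => and_congr Iff.rfl ⟨fun h a b hab => ?_,
    fun h a m ham => ?_⟩)
  · by_cases ha : s * a ∈ K
    · exact Or.inl ha
    · refine Or.inr (aux_cancel hfaith hmult K _ fun m => ?_)
      rw [smul_assoc]
      refine (h a (b • m) ?_).resolve_left ha
      rw [← smul_assoc]
      exact Submodule.smul_mem_smul hab trivial
  · obtain ⟨J, hJ⟩ := aux_elem hfaith hmult m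
    by_cases ha : s * a ∈ K
    · exact Or.inl ha
    · refine Or.inr ((hJ K s).2 fun j hj => ?_)
      exact (h a j ((hJ K a).1 ham j hj)).resolve_left ha

theorem aux_mem_ann0 (I : Ideal R) (m : M) : m ∈ ann0 R M I ↔ ∀ a ∈ I, a • m = 0 := by
  simp [ann0, Submodule.mem_torsionBySet_iff]

theorem aux_ann0 [Module.Finite R M]
    (hfaith : (⊤ : Submodule R M).annihilator = ⊥)
    (hmult : ∀ A : Submodule R M, ∃ J : Ideal R, A = J • (⊤ : Submodule R M))
    (I : Ideal R) : ann0 R M I = (ann0 R R I : Ideal R) • (⊤ : Submodule R M) := by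
  apply le_antisymm
  · intro m hm
    rw [aux_mem_ann0] at hm
    obtain ⟨J, hJ⟩ := aux_elem hfaith hmult m
    rw [← one_smul R m, hJ]
    intro j hj
    rw [one_mul, aux_mem_ann0]
    intro a ha
    have := (hJ ⊥ a).1 (by rw [hm a ha]; exact zero_mem _) j hj
    simpa using this
  · rw [Submodule.smul_le]
    intro r hr n _
    rw [aux_mem_ann0] at hr ⊢
    intro a ha
    rw [← smul_assoc, hr a ha, zero_smul]

theorem aux_copure [Module.Finite R M] (S : Set R)
    (hfaith : (⊤ : Submodule R M).annihilator = ⊥)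
    (hmult : ∀ A : Submodule R M, ∃ J : Ideal R, A = J • (⊤ : Submodule R M))
    (K : Ideal R) : SCopure S (K • (⊤ : Submodule R M)) ↔ SCopure S K := by
  unfold SCopure
  refine exists_congr fun s => and_congr Iff.rfl (forall_congr' fun I => ?_)
  rw [aux_ann0 hfaith hmult, ← Submodule.sup_smul]
  constructor
  · intro h r hr
    refine aux_cancel hfaith hmult _ _ fun m => ?_
    rw [smul_assoc]
    refine h _ fun a ha => ?_
    rw [← smul_assoc]
    exact Submodule.smul_mem_smul (hr a ha) trivial
  · intro h m hm
    obtain ⟨J, hJ⟩ := aux_elem hfaith hmult m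
    rw [hJ]
    intro j hj
    exact h j fun a ha => (hJ K a).1 (hm a ha) j hj

end aux

variable {M : Type*} [AddCommGroup M] [Module R M]

theorem stmt_18 (S : Set R) (hS0 : (0:R) ∉ S) (hS1 : (1:R) ∈ S) (hSm : ∀ s ∈ S, ∀ t ∈ S, s * t ∈ S)
    [Module.Finite R M]
    (hfaith : (⊤ : Submodule R M).annihilator = ⊥)
    (hmult : ∀ A : Submodule R M, ∃ J : Ideal R, A = J • (⊤ : Submodule R M))
    (I : Ideal R) :
    SQuasiCopure S (I • (⊤ : Submodule R M)) ↔ SQuasiCopure S I := by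
  constructor
  · intro h K hK hIK
    rw [← aux_copure (M := M) S hfaith hmult]
    exact h _ ((aux_prime S hfaith hmult K).2 hK) (Submodule.smul_mono_left hIK)
  · intro h P hP hIP
    obtain ⟨K, rfl⟩ := hmult P
    rw [aux_copure S hfaith hmult]
    refine h K ((aux_prime S hfaith hmult K).1 hP) fun r hr => ?_
    exact aux_cancel hfaith hmult K r fun m => hIP (Submodule.smul_mem_smul hr trivial)
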